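/- Let ν be a real number with ν ≥ 1, and let 0 < a < b be two consecutive positive zeroes of J_{ν−1} (i.e. J_{ν−1}(a) = J_{ν−1}(b) = 0 and J_{ν−1}(z) ≠ 0 for all z with a < z < b). Then there exists exactly one z in the open interval (a, b) with J_{ν−1}(z) − J_ν(z) = 0. Conversely, if 0 < a < b are two consecutive positive zeroes of z ↦ J_{ν−1}(z) − J_ν(z), then there exists exactly one z in (a, b) with J_{ν−1}(z) = 0. -/

import Mathlib

/-- Bessel function of the first kind of real order `ν`, defined via its power series
`J_ν(z) = ∑ₘ (−1)^m / (m! Γ(ν+m+1)) (z/2)^(ν+2m)` (with real-exponent powers). -/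
noncomputable def besselJ (ν z : ℝ) : ℝ :=
  ∑' m : ℕ, ((-1 : ℝ) ^ m / (Nat.factorial m * Real.Gamma (ν + m + 1))) *
    (z / 2) ^ (ν + 2 * (m : ℝ))

/-- `x` (indexed by `k ≥ 1`) enumerates the positive zeroes of `f`: it is strictly
increasing on indices `k ≥ 1`, each `x k` is a positive zero of `f`, and every positive
zero of `f` is some `x k`. -/
def EnumPosZeros (f : ℝ → ℝ) (x : ℕ → ℝ) : Prop :=
  StrictMonoOn x (Set.Ici 1) ∧ (∀ k, 1 ≤ k → 0 < x k ∧ f (x k) = 0) ∧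
    ∀ z : ℝ, 0 < z → f z = 0 → ∃ k, 1 ≤ k ∧ x k = z

/-!
The weighted Turán determinant `z ^ 2 * (J_ν ^ 2 - J_{ν-1} J_{ν+1})` tends to `0` at `0` and its
derivative is `2 z J_ν ^ 2`, so the determinant is positive. At a zero of `J_{ν-1}` or of
`J_{ν-1} - c J_ν` with `c > 0` the product `J_{ν-1} J_ν` is nonnegative, and the Wronskian of these
two functions is `c` times the Turán determinant plus `c J_{ν-1} J_ν / z`, hence positive.
A Wronskian that is positive at the zeros of both functions forces the zeros to interlace:
between consecutive zeros of `f` where `g` does not vanish, `f * g` would cross zero upwards twice.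
-/

open Set Filter Topology

section

variable {f g f' g' : ℝ → ℝ} {a b : ℝ}

theorem pos_right_of_deriv_pos_at_zeros (hab : a < b)
    (hf : ∀ x ∈ Icc a b, HasDerivAt f (f' x) x)
    (hpos : ∀ x ∈ Icc a b, f x = 0 → 0 < f' x) (ha : f a = 0) : 0 < f b := by
  have hb : b ∈ Icc a b := right_mem_Icc.2 hab.le
  have hnonneg : ∀ x ∈ Icc a b, 0 ≤ f x :=
    image_le_of_deriv_right_lt_deriv_boundary' (f := fun _ ↦ 0) (f' := fun _ ↦ 0)
      continuousOn_const (fun x _ ↦ hasDerivWithinAt_const x _ 0) ha.ge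
      (HasDerivAt.continuousOn hf) (fun x hx ↦ (hf x (Ico_subset_Icc_self hx)).hasDerivWithinAt)
      fun x hx h ↦ hpos x (Ico_subset_Icc_self hx) h.symm
  refine (hnonneg b hb).lt_of_ne' fun hfb ↦ ?_
  have hsign : ∀ᶠ x in 𝓝[<] b, SignType.sign (f x) = SignType.sign (x - b) :=
    nhdsWithin_le_nhds <| eventually_nhdsWithin_sign_eq_of_deriv_pos
      ((hf b hb).deriv.symm ▸ hpos b hb hfb) hfb
  obtain ⟨x, hx, hxab⟩ := (hsign.and (Ioo_mem_nhdsLT hab)).exists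
  rw [sign_neg (sub_neg.2 hxab.2), sign_eq_neg_one_iff] at hx
  exact hx.not_ge (hnonneg x (Ioo_subset_Icc_self hxab))

theorem ne_zero_right_of_wronskian_pos_at_zeros (hab : a < b)
    (hf : ∀ x ∈ Icc a b, HasDerivAt f (f' x) x) (hg : ∀ x ∈ Icc a b, HasDerivAt g (g' x) x)
    (hW : ∀ x ∈ Icc a b, f x = 0 → 0 < f' x * g x) (hg₀ : ∀ x ∈ Icc a b, g x ≠ 0)
    (ha : f a = 0) : f b ≠ 0 := by
  have hfgb : 0 < f b * g b := by
    refine pos_right_of_deriv_pos_at_zeros (f := f * g) hab (fun x hx ↦ (hf x hx).mul (hg x hx))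
      (fun x hx h ↦ ?_) (by simp [ha])
    have hfx : f x = 0 := (mul_eq_zero.1 h).resolve_right (hg₀ x hx)
    simpa [hfx] using hW x hx hfx
  exact left_ne_zero_of_mul hfgb.ne'

theorem existsUnique_zero_of_wronskian_pos_at_zeros (hab : a < b)
    (hf : ∀ x ∈ Icc a b, HasDerivAt f (f' x) x) (hg : ∀ x ∈ Icc a b, HasDerivAt g (g' x) x)
    (hW : ∀ x ∈ Icc a b, f x * g x = 0 → 0 < f' x * g x - f x * g' x)
    (ha : f a = 0) (hb : f b = 0) (hf₀ : ∀ x ∈ Ioo a b, f x ≠ 0) :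
    ∃! x, x ∈ Ioo a b ∧ g x = 0 := by
  have hWf : ∀ x ∈ Icc a b, f x = 0 → 0 < f' x * g x := fun x hx h ↦ by
    simpa [h] using hW x hx (by simp [h])
  have hWg : ∀ x ∈ Icc a b, g x = 0 → 0 < g' x * -f x := fun x hx h ↦ by
    simpa [h, mul_comm] using hW x hx (by simp [h])
  have exists_zero : ∃ x ∈ Ioo a b, g x = 0 := by
    by_contra! hg₀
    refine ne_zero_right_of_wronskian_pos_at_zeros hab hf hg hWf (fun x hx hgx ↦ ?_) ha hb
    by_cases hfx : f x = 0
    · simpa [hgx] using hWf x hx hfx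
    · have hxa : x ≠ a := by rintro rfl; exact hfx ha
      have hxb : x ≠ b := by rintro rfl; exact hfx hb
      exact hg₀ x ⟨hx.1.lt_of_ne' hxa, hx.2.lt_of_ne hxb⟩ hgx
  have not_lt_of_zeros : ∀ c ∈ Ioo a b, ∀ d ∈ Ioo a b, g c = 0 → g d = 0 → ¬c < d := by
    intro c hc d hd hgc hgd hcd
    have hsub : Icc c d ⊆ Ioo a b := Icc_subset_Ioo hc.1 hd.2
    have hsub' : Icc c d ⊆ Icc a b := hsub.trans Ioo_subset_Icc_self
    exact ne_zero_right_of_wronskian_pos_at_zeros hcd (fun x hx ↦ hg x (hsub' hx))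
      (fun x hx ↦ (hf x (hsub' hx)).neg) (fun x hx ↦ hWg x (hsub' hx))
      (fun x hx ↦ neg_ne_zero.2 (hf₀ x (hsub hx))) hgc hgd
  obtain ⟨z, hz, hgz⟩ := exists_zero
  exact ⟨z, ⟨hz, hgz⟩, fun y ⟨hy, hgy⟩ ↦ le_antisymm
    (not_lt.1 (not_lt_of_zeros z hz y hy hgz hgy)) (not_lt.1 (not_lt_of_zeros y hy z hz hgy hgz))⟩

theorem existsUnique_zero_of_wronskian_neg_at_zeros (hab : a < b)
    (hf : ∀ x ∈ Icc a b, HasDerivAt f (f' x) x) (hg : ∀ x ∈ Icc a b, HasDerivAt g (g' x) x)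
    (hW : ∀ x ∈ Icc a b, f x * g x = 0 → f' x * g x - f x * g' x < 0)
    (ha : f a = 0) (hb : f b = 0) (hf₀ : ∀ x ∈ Ioo a b, f x ≠ 0) :
    ∃! x, x ∈ Ioo a b ∧ g x = 0 := by
  have hW_neg : ∀ x ∈ Icc a b, f x * (-g) x = 0 → 0 < f' x * (-g) x - f x * -g' x := by
    intro x hx h
    rw [Pi.neg_apply] at h ⊢
    linarith [hW x hx (by linarith)]
  simpa only [Pi.neg_apply, neg_eq_zero] using existsUnique_zero_of_wronskian_pos_at_zeros hab hf
    (fun x hx ↦ (hg x hx).neg) hW_neg ha hb hf₀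

theorem lt_of_deriv_nonneg_of_eventually_pos (hab : a < b) (hfc : ContinuousOn f (Icc a b))
    (hf : ∀ x ∈ Ioo a b, HasDerivAt f (f' x) x) (hnonneg : ∀ x ∈ Ioo a b, 0 ≤ f' x)
    (hpos : ∀ᶠ x in 𝓝[>] a, 0 < f' x) : f a < f b := by
  obtain ⟨c, hc, hcpos⟩ := (mem_nhdsGT_iff_exists_mem_Ioc_Ioo_subset hab).1 hpos
  have hac : f a < f c := by
    obtain ⟨x, hx, hslope⟩ := exists_hasDerivAt_eq_slope f f' hc.1
      (hfc.mono (Icc_subset_Icc_right hc.2)) fun x hx ↦ hf x (Ioo_subset_Ioo_right hc.2 hx)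
    have hfx : 0 < f' x := hcpos hx
    rw [hslope, div_pos_iff_of_pos_right (sub_pos.2 hc.1)] at hfx
    exact sub_pos.1 hfx
  have hmono : MonotoneOn f (Icc a b) := by
    refine monotoneOn_of_hasDerivWithinAt_nonneg (f' := f') (convex_Icc a b) hfc ?_ ?_ <;>
      rw [interior_Icc]
    · exact fun x hx ↦ (hf x hx).hasDerivWithinAt
    · exact hnonneg
  exact hac.trans_le (hmono (Ioc_subset_Icc_self hc) (right_mem_Icc.2 hab.le) hc.2)

end

open FormalMultilinearSeries in
theorem hasDerivAt_tsum_mul_pow {𝕜 : Type*} [NontriviallyNormedField 𝕜] [CompleteSpace 𝕜]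
    {c : ℕ → 𝕜} {x : 𝕜} (hx : ‖x‖ₑ < (ofScalars 𝕜 c).radius) :
    HasDerivAt (fun y ↦ ∑' n, c n * y ^ n) (∑' n, (n + 1) * c (n + 1) * x ^ n) x := by
  set p : FormalMultilinearSeries 𝕜 𝕜 𝕜 := ofScalars 𝕜 c
  have hsum : p.sum = fun y ↦ ∑' n, c n * y ^ n := by
    simpa only [smul_eq_mul] using! ofScalarsSum_eq_tsum (E := 𝕜) c
  have hsummable : Summable fun n ↦ p.derivSeries n fun _ ↦ x :=
    p.derivSeries.summable (by simpa using hx.trans_le p.radius_le_radius_derivSeries)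
  have hderiv : p.derivSeries.sum x 1 = ∑' n, (n + 1) * c (n + 1) * x ^ n := by
    refine (ContinuousLinearMap.apply 𝕜 𝕜 (1 : 𝕜)).map_tsum hsummable |>.trans
      (tsum_congr fun n ↦ ?_)
    simp [derivSeries_coeff_one, p, mul_comm]
  exact hsum ▸ hderiv ▸ (p.hasFDerivAt_sum hx).hasDerivAt

/-- Coefficients of the Bessel–Clifford function. Since `Real.Gamma` is `0` at its poles, inversion
in `ℝ` gives `1 / Γ` its correct value `0` there, and no restriction on `ν` is needed. -/
noncomputable def besselCliffordCoeff (ν : ℝ) (m : ℕ) : ℝ :=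
  (m.factorial * Real.Gamma (ν + m + 1))⁻¹

/-- The Bessel–Clifford function `C_ν(x) = ∑ₘ xᵐ / (m! Γ(ν + m + 1))`, the entire function for which
`J_ν(z) = (z / 2) ^ ν * C_ν(-(z / 2)²)`. -/
noncomputable def besselClifford (ν x : ℝ) : ℝ :=
  ∑' m, besselCliffordCoeff ν m * x ^ m

theorem succ_mul_besselCliffordCoeff_succ (ν : ℝ) (m : ℕ) :
    (m + 1) * besselCliffordCoeff ν (m + 1) = besselCliffordCoeff (ν + 1) m := by
  have hm : (m : ℝ) + 1 ≠ 0 := by positivity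
  have hν : ν + (m + 1 : ℕ) + 1 = ν + 1 + m + 1 := by push_cast; ring
  rw [besselCliffordCoeff, besselCliffordCoeff, hν, Nat.factorial_succ, Nat.cast_mul,
    Nat.cast_succ, mul_assoc, mul_inv, mul_inv_cancel_left₀ hm]

theorem add_mul_besselCliffordCoeff (ν : ℝ) (m : ℕ) :
    (ν + m) * besselCliffordCoeff ν m = besselCliffordCoeff (ν - 1) m := by
  have hν : ν - 1 + m + 1 = ν + m := by ring
  rw [besselCliffordCoeff, besselCliffordCoeff, hν]
  rcases eq_or_ne (ν + m) 0 with h | h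
  · simp [h]
  · rw [Real.Gamma_add_one h, mul_left_comm, mul_inv, mul_inv_cancel_left₀ h]

theorem besselCliffordCoeff_eq_mul_succ (ν : ℝ) (m : ℕ) :
    besselCliffordCoeff ν m = (m + 1) * (ν + m + 1) * besselCliffordCoeff ν (m + 1) := by
  have h := add_mul_besselCliffordCoeff (ν + 1) m
  rw [add_sub_cancel_right, ← succ_mul_besselCliffordCoeff_succ] at h
  rw [← h]
  ring

theorem summable_norm_besselCliffordCoeff_mul_pow (ν x : ℝ) :
    Summable fun m ↦ ‖besselCliffordCoeff ν m * x ^ m‖ := by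
  have hbase : Tendsto (fun m : ℕ ↦ ν + m + 1) atTop atTop :=
    tendsto_atTop_add_const_right _ _ (tendsto_atTop_add_const_left _ _ tendsto_natCast_atTop_atTop)
  refine summable_of_ratio_norm_eventually_le (r := 1 / 2) (by norm_num) ?_
  filter_upwards [hbase.eventually_ge_atTop (2 * |x|), hbase.eventually_gt_atTop 0] with m hm hm₀
  have hfactor : 2 * |x| ≤ (m + 1) * (ν + m + 1) :=
    hm.trans (le_mul_of_one_le_left hm₀.le (by simp))
  have hnonneg : 0 ≤ |besselCliffordCoeff ν (m + 1)| * |x| ^ m := by positivity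
  simp only [norm_mul, norm_pow, Real.norm_eq_abs, abs_abs, pow_succ,
    besselCliffordCoeff_eq_mul_succ ν m, abs_of_pos hm₀,
    abs_of_pos (Nat.cast_add_one_pos m : (0 : ℝ) < m + 1)]
  linarith [mul_le_mul_of_nonneg_left hfactor hnonneg]

theorem hasSum_besselClifford (ν x : ℝ) :
    HasSum (fun m ↦ besselCliffordCoeff ν m * x ^ m) (besselClifford ν x) :=
  (summable_norm_besselCliffordCoeff_mul_pow ν x).of_norm.hasSum

theorem radius_ofScalars_besselCliffordCoeff (ν : ℝ) :
    (FormalMultilinearSeries.ofScalars ℝ (besselCliffordCoeff ν)).radius = ⊤ :=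
  FormalMultilinearSeries.radius_eq_top_of_summable_norm _ fun r ↦ by
    simpa [norm_mul] using summable_norm_besselCliffordCoeff_mul_pow ν r

theorem hasDerivAt_besselClifford (ν x : ℝ) :
    HasDerivAt (besselClifford ν) (besselClifford (ν + 1) x) x := by
  have h := hasDerivAt_tsum_mul_pow (c := besselCliffordCoeff ν) (x := x)
    (by simp [radius_ofScalars_besselCliffordCoeff])
  simpa only [succ_mul_besselCliffordCoeff_succ] using! h

theorem continuous_besselClifford (ν : ℝ) : Continuous (besselClifford ν) :=
  continuous_iff_continuousAt.2 fun x ↦ (hasDerivAt_besselClifford ν x).continuousAt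

theorem besselClifford_zero_right (ν : ℝ) : besselClifford ν 0 = (Real.Gamma (ν + 1))⁻¹ := by
  rw [besselClifford, tsum_eq_single 0 fun m hm ↦ by simp [hm]]
  simp [besselCliffordCoeff]

theorem besselClifford_sub_one (ν x : ℝ) :
    besselClifford (ν - 1) x = ν * besselClifford ν x + x * besselClifford (ν + 1) x := by
  have hshift : HasSum (fun m : ℕ ↦ m * besselCliffordCoeff ν m * x ^ m)
      (x * besselClifford (ν + 1) x) := by
    rw [← hasSum_nat_add_iff' 1]
    simpa [succ_mul_besselCliffordCoeff_succ, pow_succ', mul_left_comm] using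
      (hasSum_besselClifford (ν + 1) x).mul_left x
  refine HasSum.unique ?_ (((hasSum_besselClifford ν x).mul_left ν).add hshift)
  simpa only [← add_mul_besselCliffordCoeff ν, add_mul, mul_assoc] using
    hasSum_besselClifford (ν - 1) x

/-- The Turán-type determinant `C_ν² - C_{ν-1} C_{ν+1}` at `-y`, weighted so that its
derivative is a square times a power of `y`. -/
noncomputable def weightedTuranian (ν y : ℝ) : ℝ :=
  y ^ (ν + 1) *
    (besselClifford ν (-y) ^ 2 - besselClifford (ν - 1) (-y) * besselClifford (ν + 1) (-y))

theorem hasDerivAt_weightedTuranian (ν : ℝ) {y : ℝ} (hy : 0 < y) :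
    HasDerivAt (weightedTuranian ν) (y ^ ν * besselClifford ν (-y) ^ 2) y := by
  have hneg (μ : ℝ) :
      HasDerivAt (fun y ↦ besselClifford μ (-y)) (-besselClifford (μ + 1) (-y)) y := by
    simpa [Function.comp_def] using (hasDerivAt_besselClifford μ (-y)).comp y (hasDerivAt_neg y)
  have h := (Real.hasDerivAt_rpow_const (p := ν + 1) (Or.inl hy.ne')).mul
    (((hneg ν).pow 2).sub ((hneg (ν - 1)).mul (hneg (ν + 1))))
  refine h.congr_deriv ?_
  have hrec := besselClifford_sub_one ν (-y)
  have hrec_succ := besselClifford_sub_one (ν + 1) (-y)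
  simp only [add_sub_cancel_right] at hrec_succ
  simp only [add_sub_cancel_right, sub_add_cancel, Real.rpow_add_one hy.ne', Pi.pow_apply,
    Pi.mul_apply, Pi.sub_apply]
  linear_combination y ^ ν * besselClifford (ν - 1) (-y) * hrec_succ -
    y ^ ν * besselClifford ν (-y) * hrec

theorem weightedTuranian_pos {ν y : ℝ} (hν : -1 < ν) (hy : 0 < y) :
    0 < weightedTuranian ν y := by
  have hcont : Continuous (weightedTuranian ν) := by
    have := continuous_besselClifford
    exact (Real.continuous_rpow_const (by linarith)).mul (by fun_prop)
  have hnear : ∀ᶠ x in 𝓝[>] (0 : ℝ), besselClifford ν (-x) ≠ 0 := by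
    refine nhdsWithin_le_nhds <|
      ((continuous_besselClifford ν).comp continuous_neg).continuousAt.eventually_ne ?_
    simpa [besselClifford_zero_right] using (Real.Gamma_pos_of_pos (by linarith)).ne'
  have h := lt_of_deriv_nonneg_of_eventually_pos hy hcont.continuousOn
    (fun x hx ↦ hasDerivAt_weightedTuranian ν hx.1)
    (fun x hx ↦ mul_nonneg (Real.rpow_nonneg hx.1.le ν) (sq_nonneg _))
    (by
      filter_upwards [hnear, self_mem_nhdsWithin] with x hx hx₀
      exact mul_pos (Real.rpow_pos_of_pos hx₀ ν) (by positivity))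
  rwa [weightedTuranian, Real.zero_rpow (by linarith), zero_mul] at h

theorem besselClifford_turan {ν y : ℝ} (hν : -1 < ν) (hy : 0 < y) :
    besselClifford (ν - 1) (-y) * besselClifford (ν + 1) (-y) < besselClifford ν (-y) ^ 2 :=
  sub_pos.1 (pos_of_mul_pos_right (weightedTuranian_pos hν hy) (Real.rpow_nonneg hy.le _))

theorem besselJ_eq_rpow_mul_besselClifford (ν : ℝ) {z : ℝ} (hz : 0 < z) :
    besselJ ν z = (z / 2) ^ ν * besselClifford ν (-(z / 2) ^ 2) := by
  rw [besselJ, besselClifford, ← tsum_mul_left]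
  refine tsum_congr fun m ↦ ?_
  have hz₂ : 0 < z / 2 := half_pos hz
  rw [Real.rpow_add hz₂, Real.rpow_mul hz₂.le, Real.rpow_two, Real.rpow_natCast,
    besselCliffordCoeff, neg_pow ((z / 2) ^ 2)]
  ring

theorem hasDerivAt_besselJ (ν : ℝ) {z : ℝ} (hz : 0 < z) :
    HasDerivAt (besselJ ν) (ν / z * besselJ ν z - besselJ (ν + 1) z) z := by
  have hz₂ : z / 2 ≠ 0 := (half_pos hz).ne'
  have hhalf : HasDerivAt (fun x : ℝ ↦ x / 2) (1 / 2) z := (hasDerivAt_id z).div_const 2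
  have h := (hhalf.rpow_const (p := ν) (Or.inl hz₂)).mul
    ((hasDerivAt_besselClifford ν _).comp z (hhalf.pow 2).neg)
  refine (h.congr_deriv ?_).congr_of_eventuallyEq ?_
  · rw [besselJ_eq_rpow_mul_besselClifford ν hz, besselJ_eq_rpow_mul_besselClifford (ν + 1) hz,
      Real.rpow_sub_one hz₂, Real.rpow_add_one hz₂]
    simp only [Function.comp_apply, Pi.pow_apply, Pi.neg_apply]
    field_simp
    ring
  · filter_upwards [eventually_gt_nhds hz] with x hx using besselJ_eq_rpow_mul_besselClifford ν hx

theorem besselJ_sub_one_add_besselJ_add_one (ν : ℝ) {z : ℝ} (hz : 0 < z) :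
    besselJ (ν - 1) z + besselJ (ν + 1) z = 2 * ν / z * besselJ ν z := by
  have hz₂ : z / 2 ≠ 0 := (half_pos hz).ne'
  simp only [besselJ_eq_rpow_mul_besselClifford _ hz, besselClifford_sub_one ν,
    Real.rpow_sub_one hz₂, Real.rpow_add_one hz₂]
  field_simp
  ring

theorem hasDerivAt_besselJ' (ν : ℝ) {z : ℝ} (hz : 0 < z) :
    HasDerivAt (besselJ ν) (besselJ (ν - 1) z - ν / z * besselJ ν z) z := by
  refine (hasDerivAt_besselJ ν hz).congr_deriv ?_
  linear_combination -besselJ_sub_one_add_besselJ_add_one ν hz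

theorem besselJ_turan {ν z : ℝ} (hν : -1 < ν) (hz : 0 < z) :
    besselJ (ν - 1) z * besselJ (ν + 1) z < besselJ ν z ^ 2 := by
  have hz₂ : 0 < z / 2 := half_pos hz
  calc besselJ (ν - 1) z * besselJ (ν + 1) z
      = ((z / 2) ^ ν) ^ 2 * (besselClifford (ν - 1) (-(z / 2) ^ 2) *
          besselClifford (ν + 1) (-(z / 2) ^ 2)) := by
        simp only [besselJ_eq_rpow_mul_besselClifford _ hz, Real.rpow_sub_one hz₂.ne',
          Real.rpow_add_one hz₂.ne']
        field_simp
    _ < ((z / 2) ^ ν) ^ 2 * besselClifford ν (-(z / 2) ^ 2) ^ 2 := by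
        gcongr
        exact besselClifford_turan hν (pow_pos hz₂ 2)
    _ = besselJ ν z ^ 2 := by
        rw [besselJ_eq_rpow_mul_besselClifford ν hz, mul_pow]

theorem hasDerivAt_besselJ_sub_one (ν : ℝ) {z : ℝ} (hz : 0 < z) :
    HasDerivAt (besselJ (ν - 1)) ((ν - 1) / z * besselJ (ν - 1) z - besselJ ν z) z := by
  simpa only [sub_add_cancel] using hasDerivAt_besselJ (ν - 1) hz

theorem wronskian_besselJ_pos_at_zeros {ν c z : ℝ} (hν : -1 < ν) (hc : 0 < c) (hz : 0 < z)
    (h : besselJ (ν - 1) z * (besselJ (ν - 1) z - c * besselJ ν z) = 0) :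
    0 < ((ν - 1) / z * besselJ (ν - 1) z - besselJ ν z) * (besselJ (ν - 1) z - c * besselJ ν z) -
      besselJ (ν - 1) z * ((ν - 1) / z * besselJ (ν - 1) z - besselJ ν z -
        c * (besselJ (ν - 1) z - ν / z * besselJ ν z)) := by
  have hturan : 0 < besselJ ν z ^ 2 - besselJ (ν - 1) z * besselJ (ν + 1) z :=
    sub_pos.2 (besselJ_turan hν hz)
  have hprod : c * (besselJ (ν - 1) z * besselJ ν z) = besselJ (ν - 1) z ^ 2 := by
    linear_combination -h
  calc 0 < c * (besselJ ν z ^ 2 - besselJ (ν - 1) z * besselJ (ν + 1) z) +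
        besselJ (ν - 1) z ^ 2 / z := by positivity
    _ = _ := by
      rw [← hprod]
      linear_combination -c * besselJ (ν - 1) z * besselJ_sub_one_add_besselJ_add_one ν hz

theorem stmt2_general (ν c : ℝ) (hν : -1 < ν) (hc : 0 < c) :
    (∀ a b : ℝ, 0 < a → a < b → besselJ (ν - 1) a = 0 → besselJ (ν - 1) b = 0 →
      (∀ z : ℝ, a < z → z < b → besselJ (ν - 1) z ≠ 0) →
      ∃! z : ℝ, z ∈ Ioo a b ∧ besselJ (ν - 1) z - c * besselJ ν z = 0) ∧
    (∀ a b : ℝ, 0 < a → a < b →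
      besselJ (ν - 1) a - c * besselJ ν a = 0 → besselJ (ν - 1) b - c * besselJ ν b = 0 →
      (∀ z : ℝ, a < z → z < b → besselJ (ν - 1) z - c * besselJ ν z ≠ 0) →
      ∃! z : ℝ, z ∈ Ioo a b ∧ besselJ (ν - 1) z = 0) := by
  have hu (z : ℝ) (hz : 0 < z) := hasDerivAt_besselJ_sub_one ν hz
  have hw (z : ℝ) (hz : 0 < z) := (hu z hz).sub ((hasDerivAt_besselJ' ν hz).const_mul c)
  refine ⟨fun a b ha hab hza hzb hne ↦ ?_, fun a b ha hab hza hzb hne ↦ ?_⟩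
  · exact existsUnique_zero_of_wronskian_pos_at_zeros hab (fun z hz ↦ hu z (ha.trans_le hz.1))
      (fun z hz ↦ hw z (ha.trans_le hz.1))
      (fun z hz ↦ wronskian_besselJ_pos_at_zeros hν hc (ha.trans_le hz.1))
      hza hzb fun z hz ↦ hne z hz.1 hz.2
  · refine existsUnique_zero_of_wronskian_neg_at_zeros hab (fun z hz ↦ hw z (ha.trans_le hz.1))
      (fun z hz ↦ hu z (ha.trans_le hz.1)) (fun z hz h ↦ ?_) hza hzb fun z hz ↦ hne z hz.1 hz.2
    have hW := wronskian_besselJ_pos_at_zeros hν hc (ha.trans_le hz.1) (mul_comm _ _ |>.trans h)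
    simp only [Pi.sub_apply]
    linarith

/-- For `ν ≥ 1`, between two consecutive positive zeroes of `J_{ν−1}` there is
exactly one zero of `J_{ν−1} − J_ν`, and conversely. -/
theorem stmt2 (ν : ℝ) (hν : 1 ≤ ν) :
    (∀ a b : ℝ, 0 < a → a < b → besselJ (ν - 1) a = 0 → besselJ (ν - 1) b = 0 →
      (∀ z : ℝ, a < z → z < b → besselJ (ν - 1) z ≠ 0) →
      ∃! z : ℝ, z ∈ Set.Ioo a b ∧ besselJ (ν - 1) z - besselJ ν z = 0) ∧
    (∀ a b : ℝ, 0 < a → a < b →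
      besselJ (ν - 1) a - besselJ ν a = 0 → besselJ (ν - 1) b - besselJ ν b = 0 →
      (∀ z : ℝ, a < z → z < b → besselJ (ν - 1) z - besselJ ν z ≠ 0) →
      ∃! z : ℝ, z ∈ Set.Ioo a b ∧ besselJ (ν - 1) z = 0) := by
  simpa only [one_mul] using stmt2_general ν 1 (by linarith) one_pos
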